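/- arXiv:1705.03434 — 4 statements merged into one kernel-verified Lean document; each statement's English description precedes it below -/
import Mathlib

section
/- Let H be a finite-dimensional real inner product space, let A : H → H be a self-adjoint linear operator with ⟨Au,u⟩ ≥ δ‖u‖² for all u ∈ H for some δ > 0, let τ > 0 be a time step and σ ≥ 1/2 a weight. Suppose the sequence (yⁿ)₀≤n≤N in H satisfies the two-level weighted scheme (yⁿ⁺¹ − yⁿ)/τ + A(σ yⁿ⁺¹ + (1−σ) yⁿ) = φⁿ for n = 0,1,…,N−1, with y⁰ = w⁰ (note that for σ > 0 the operator I + στA is invertible, so yⁿ⁺¹ is well defined). Then the scheme is unconditionally stable: for every n = 0,1,…,N−1 one has ‖yⁿ⁺¹‖ ≤ ‖w⁰‖ + τ · Σ_{j=0}^{n} ‖φʲ‖. -/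
open scoped RealInnerProductSpace

lemma step_aux
    {H : Type*} [NormedAddCommGroup H] [InnerProductSpace ℝ H]
    [FiniteDimensional ℝ H]
    (A : H →L[ℝ] H) (hA : ∀ u : H, 0 ≤ ⟪A u, u⟫)
    (τ : ℝ) (hτ : 0 < τ) (σ : ℝ) (hσ : 1 / 2 ≤ σ) (x y f : H)
    (h : τ⁻¹ • (x - y) + A (σ • x + (1 - σ) • y) = f) :
    ‖x‖ ≤ ‖y‖ + τ * ‖f‖ := by
  have hB : ∀ b : H, ‖b‖ ≤ ‖b + (σ * τ) • A b‖ := by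
    intro b
    have h1 : ‖b‖ * ‖b‖ ≤ ‖b + (σ * τ) • A b‖ * ‖b‖ := by
      refine le_trans ?_ (real_inner_le_norm _ _)
      rw [inner_add_left, real_inner_smul_left, real_inner_self_eq_norm_mul_norm]
      have : 0 ≤ (σ * τ) * ⟪A b, b⟫ := mul_nonneg (by positivity) (hA b)
      linarith
    by_contra hc
    push Not at hc
    have : 0 < ‖b‖ := lt_of_le_of_lt (norm_nonneg _) hc
    nlinarith
  let L : H →ₗ[ℝ] H := LinearMap.id + (σ * τ) • (A : H →ₗ[ℝ] H)
  have hL : ∀ b, L b = b + (σ * τ) • A b := fun b => rfl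
  have hinj : Function.Injective L := by
    rw [injective_iff_map_eq_zero]
    intro b hb
    have := hB b
    rw [← hL, hb, norm_zero] at this
    exact norm_le_zero_iff.mp this
  obtain ⟨b, hb⟩ := (LinearMap.injective_iff_surjective.mp hinj) (τ • f)
  have hbn : ‖b‖ ≤ τ * ‖f‖ := by
    have := hB b
    rwa [← hL, hb, norm_smul, Real.norm_of_nonneg hτ.le] at this
  rw [hL] at hb
  have h' : (x - y) + τ • A (σ • x + (1 - σ) • y) = τ • f := by
    rw [← h, smul_add, smul_inv_smul₀ hτ.ne']
  obtain ⟨a, rfl⟩ : ∃ a, x = a + b := ⟨x - b, by simp⟩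
  have ha : (a - y) + τ • A (σ • a + (1 - σ) • y) = 0 := by
    rw [← hb] at h'
    simp only [map_add, map_smul, smul_add] at h' ⊢
    rw [← sub_eq_zero] at h'
    rw [← h']
    module
  have han : ‖a‖ ≤ ‖y‖ := by
    have h2 : ⟪(a - y) + τ • A (σ • a + (1 - σ) • y), σ • a + (1 - σ) • y⟫ = 0 := by
      rw [ha, inner_zero_left]
    have h3 := mul_nonneg hτ.le (hA (σ • a + (1 - σ) • y))
    rw [inner_add_left, real_inner_smul_left] at h2
    have h4 : ⟪a - y, σ • a + (1 - σ) • y⟫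
        = (‖a‖ ^ 2 - ‖y‖ ^ 2) / 2 + (σ - 1 / 2) * ‖a - y‖ ^ 2 := by
      rw [norm_sub_sq_real]
      simp only [inner_sub_left, inner_add_right, real_inner_smul_right,
        real_inner_self_eq_norm_sq, real_inner_comm a y]
      ring
    have h5 : 0 ≤ (σ - 1 / 2) * ‖a - y‖ ^ 2 := mul_nonneg (by linarith) (by positivity)
    exact (abs_le_of_sq_le_sq' (by linarith) (norm_nonneg y)).2
  exact (norm_add_le a b).trans (add_le_add han hbn)

/-- Theorem 1 of the paper: unconditional stability of the two-level weighted
scheme `(yⁿ⁺¹ − yⁿ)/τ + A(σ yⁿ⁺¹ + (1−σ) yⁿ) = φⁿ` for a self-adjoint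
positive definite operator `A` and weight `σ ≥ 1/2`. -/
theorem twoLevelScheme_stability
    {H : Type*} [NormedAddCommGroup H] [InnerProductSpace ℝ H]
    [FiniteDimensional ℝ H]
    (A : H →L[ℝ] H)
    (hAsa : ∀ u v : H, ⟪A u, v⟫ = ⟪u, A v⟫)
    (δ : ℝ) (hδ : 0 < δ)
    (hApos : ∀ u : H, δ * ‖u‖ ^ 2 ≤ ⟪A u, u⟫)
    (τ : ℝ) (hτ : 0 < τ)
    (σ : ℝ) (hσ : 1 / 2 ≤ σ)
    (N : ℕ) (y φ : ℕ → H) (w0 : H)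
    (hscheme : ∀ n, n < N →
      τ⁻¹ • (y (n + 1) - y n) + A (σ • y (n + 1) + (1 - σ) • y n) = φ n)
    (hinit : y 0 = w0) :
    ∀ n, n < N →
      ‖y (n + 1)‖ ≤ ‖w0‖ + τ * ∑ j ∈ Finset.range (n + 1), ‖φ j‖ := by
  have hA : ∀ u : H, 0 ≤ ⟪A u, u⟫ := fun u => le_trans (by positivity) (hApos u)
  intro n
  induction n with
  | zero =>
    intro hn
    have := step_aux A hA τ hτ σ hσ _ _ _ (hscheme 0 hn)
    simpa [hinit] using this
  | succ k ih =>
    intro hn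
    have h1 := step_aux A hA τ hτ σ hσ _ _ _ (hscheme (k + 1) hn)
    have h2 := ih (by omega)
    rw [Finset.sum_range_succ, mul_add]
    linarith
end

section
/- Kellogg's lemma: Let H be a finite-dimensional real inner product space, let A : H → H be self-adjoint with ⟨Au,u⟩ ≥ 0 for all u, and let γ ≥ 0. Then I + γA is invertible and the operator T = (I + γA)⁻¹(I − γA) satisfies ‖T‖ ≤ 1 in the operator norm. -/
open scoped RealInnerProductSpace

/-- Kellogg's lemma: for a self-adjoint nonnegative operator `A` on a
finite-dimensional real inner product space and `γ ≥ 0`, the operator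
`I + γA` is invertible and `T = (I + γA)⁻¹(I − γA)` satisfies `‖T‖ ≤ 1`. -/
theorem kellogg_lemma
    {H : Type*} [NormedAddCommGroup H] [InnerProductSpace ℝ H]
    [FiniteDimensional ℝ H]
    (A : H →L[ℝ] H)
    (hAsa : ∀ u v : H, ⟪A u, v⟫ = ⟪u, A v⟫)
    (hApos : ∀ u : H, 0 ≤ ⟪A u, u⟫)
    (γ : ℝ) (hγ : 0 ≤ γ) :
    IsUnit ((1 : H →L[ℝ] H) + γ • A) ∧
    ‖Ring.inverse ((1 : H →L[ℝ] H) + γ • A) * ((1 : H →L[ℝ] H) - γ • A)‖ ≤ 1 := by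
  have : CompleteSpace H := FiniteDimensional.complete ℝ H
  have hinj : Function.Injective ((1 : H →L[ℝ] H) + γ • A) := by
    rw [injective_iff_map_eq_zero]
    intro u hu
    have h1 : ⟪u + γ • A u, u⟫ = 0 := by
      have : u + γ • A u = 0 := by simpa using hu
      rw [this, inner_zero_left]
    rw [inner_add_left, real_inner_smul_left] at h1
    have h2 := mul_nonneg hγ (hApos u)
    have h3 : 0 ≤ ⟪u, u⟫ := real_inner_self_nonneg
    have h4 : ⟪u, u⟫ = 0 := by linarith
    exact inner_self_eq_zero.mp h4
  have hunit : IsUnit ((1 : H →L[ℝ] H) + γ • A) := by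
    rw [ContinuousLinearMap.isUnit_iff_bijective]
    exact ⟨hinj, LinearMap.injective_iff_surjective
      (f := (((1 : H →L[ℝ] H) + γ • A : H →L[ℝ] H) : H →ₗ[ℝ] H)) |>.mp hinj⟩
  refine ⟨hunit, ?_⟩
  set B : H →L[ℝ] H := 1 + γ • A with hB
  set C : H →L[ℝ] H := 1 - γ • A with hC
  have hcomm : B * C = C * B := by
    rw [hB, hC]
    generalize γ • A = D
    noncomm_ring
  have hTC : Ring.inverse B * C = C * Ring.inverse B := by
    calc Ring.inverse B * C = Ring.inverse B * (C * B) * Ring.inverse B := by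
          rw [mul_assoc, mul_assoc, Ring.mul_inverse_cancel _ hunit, mul_one]
      _ = C * Ring.inverse B := by
          rw [← hcomm, ← mul_assoc, Ring.inverse_mul_cancel _ hunit, one_mul]
  rw [hTC]
  refine ContinuousLinearMap.opNorm_le_bound _ zero_le_one fun x => ?_
  have hx : B (Ring.inverse B x) = x := by
    have := congrArg (fun f : H →L[ℝ] H => f x) (Ring.mul_inverse_cancel _ hunit)
    simpa using this
  rw [one_mul, ContinuousLinearMap.mul_apply]
  conv_rhs => rw [← hx]
  generalize Ring.inverse B x = y
  have hCy : C y = y - γ • A y := by simp [hC]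
  have hBy : B y = y + γ • A y := by simp [hB]
  rw [hCy, hBy]
  refine (abs_le_of_sq_le_sq' ?_ (norm_nonneg _)).2
  rw [norm_sub_sq_real, norm_add_sq_real, real_inner_smul_right, real_inner_comm]
  have := mul_nonneg hγ (hApos y)
  linarith
end

section
/- Let H be a finite-dimensional real inner product space and let A₁, A₂ : H → H be self-adjoint operators with ⟨A_α u,u⟩ ≥ 0 for all u (α = 1,2). Let τ > 0 and σ ≥ 1/2, and set B_α = I + στA_α (α = 1,2), which are invertible. Suppose the sequence (yⁿ)₀≤n≤N in H satisfies the factorized scheme B₁B₂ (yⁿ⁺¹ − yⁿ)/τ + (A₁ + A₂) yⁿ = φⁿ for n = 0,1,…,N−1, with y⁰ = w⁰. Then the scheme is unconditionally stable and for every n = 0,1,…,N−1 one has ‖B₂ yⁿ⁺¹‖ ≤ ‖B₂ w⁰‖ + τ · Σ_{j=0}^{n} ‖φʲ‖. -/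
open scoped RealInnerProductSpace

theorem aux_minus_le {H : Type*} [NormedAddCommGroup H] [InnerProductSpace ℝ H]
    (u v : H) (h : 0 ≤ ⟪v, u⟫) : ‖u - v‖ ≤ ‖u + v‖ := by
  refine (pow_le_pow_iff_left₀ (norm_nonneg _) (norm_nonneg _) two_ne_zero).1 ?_
  rw [norm_sub_sq_real, norm_add_sq_real, real_inner_comm]
  linarith

theorem aux_le {H : Type*} [NormedAddCommGroup H] [InnerProductSpace ℝ H]
    (u v : H) (h : 0 ≤ ⟪v, u⟫) : ‖u‖ ≤ ‖u + v‖ := by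
  refine (pow_le_pow_iff_left₀ (norm_nonneg _) (norm_nonneg _) two_ne_zero).1 ?_
  rw [norm_add_sq_real, real_inner_comm]
  nlinarith [sq_nonneg ‖v‖]

/-- Theorem 2 of the paper: unconditional stability of the factorized
two-component splitting scheme `B₁B₂(yⁿ⁺¹ − yⁿ)/τ + (A₁ + A₂)yⁿ = φⁿ`,
where `B_α = I + στA_α`, for self-adjoint nonnegative `A₁, A₂` and `σ ≥ 1/2`. -/
theorem factorized_scheme_stability
    {H : Type*} [NormedAddCommGroup H] [InnerProductSpace ℝ H]
    [FiniteDimensional ℝ H]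
    (A₁ A₂ : H →L[ℝ] H)
    (hA₁sa : ∀ u v : H, ⟪A₁ u, v⟫ = ⟪u, A₁ v⟫)
    (hA₂sa : ∀ u v : H, ⟪A₂ u, v⟫ = ⟪u, A₂ v⟫)
    (hA₁pos : ∀ u : H, 0 ≤ ⟪A₁ u, u⟫)
    (hA₂pos : ∀ u : H, 0 ≤ ⟪A₂ u, u⟫)
    (τ : ℝ) (hτ : 0 < τ)
    (σ : ℝ) (hσ : 1 / 2 ≤ σ)
    (N : ℕ) (y φ : ℕ → H) (w0 : H)
    (hscheme : ∀ n, n < N →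
      (((1 : H →L[ℝ] H) + (σ * τ) • A₁) * ((1 : H →L[ℝ] H) + (σ * τ) • A₂))
          (τ⁻¹ • (y (n + 1) - y n)) + (A₁ + A₂) (y n) = φ n)
    (hinit : y 0 = w0) :
    ∀ n, n < N →
      ‖((1 : H →L[ℝ] H) + (σ * τ) • A₂) (y (n + 1))‖ ≤
        ‖((1 : H →L[ℝ] H) + (σ * τ) • A₂) w0‖ +
          τ * ∑ j ∈ Finset.range (n + 1), ‖φ j‖ := by
  have hσ0 : 0 < σ := by linarith
  obtain ⟨c, hc⟩ : ∃ c, c = σ * τ := ⟨_, rfl⟩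
  have hc0 : 0 < c := by rw [hc]; positivity
  rw [← hc] at hscheme ⊢
  have h1 : ∀ u, 0 ≤ ⟪c • A₁ u, u⟫ := fun u => by
    rw [real_inner_smul_left]; exact mul_nonneg hc0.le (hA₁pos u)
  have h2 : ∀ u, 0 ≤ ⟪c • A₂ u, u⟫ := fun u => by
    rw [real_inner_smul_left]; exact mul_nonneg hc0.le (hA₂pos u)
  let B : H →ₗ[ℝ] H := ((1 : H →L[ℝ] H) + c • A₁ : H →L[ℝ] H)
  have hB : ∀ u, B u = u + c • A₁ u := fun u => rfl
  have hinj : Function.Injective B := by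
    rw [injective_iff_map_eq_zero]
    intro u hu
    have := aux_le u _ (h1 u)
    rw [← hB, hu, norm_zero] at this
    exact norm_le_zero_iff.1 this
  have hsurj : Function.Surjective B := LinearMap.injective_iff_surjective.1 hinj
  have step : ∀ n, n < N →
      ‖y (n + 1) + c • A₂ (y (n + 1))‖ ≤ ‖y n + c • A₂ (y n)‖ + τ * ‖φ n‖ := by
    intro n hn
    obtain ⟨d, hd⟩ : ∃ d, d = τ⁻¹ • (y (n + 1) - y n) := ⟨_, rfl⟩
    have hy : y (n + 1) = y n + τ • d := by
      rw [hd, smul_smul, mul_inv_cancel₀ hτ.ne', one_smul]; abel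
    have hs : B (d + c • A₂ d) + (A₁ (y n) + A₂ (y n)) = φ n := by
      rw [hd]; exact hscheme n hn
    obtain ⟨p, hp⟩ := hsurj (y n - c • A₂ (y n))
    obtain ⟨q, hq⟩ := hsurj (φ n)
    obtain ⟨r, hr⟩ : ∃ r, r = 1 / (2 * σ) := ⟨_, rfl⟩
    have hr0 : 0 ≤ r := by rw [hr]; positivity
    have hr1 : r ≤ 1 := by rw [hr, div_le_one (by positivity)]; linarith
    have hrc : 2 * r * c = τ := by rw [hr, hc]; field_simp
    have key : y (n + 1) + c • A₂ (y (n + 1)) =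
        (1 - r) • (y n + c • A₂ (y n)) + r • (p - c • A₁ p) + τ • q := by
      apply hinj
      have e1 : B (p - c • A₁ p) = B p - c • A₁ (B p) := by
        simp only [hB, map_add, map_sub, map_smul]
        module
      rw [map_add B (_ + _) (τ • q), map_add B ((1 - r) • _), map_smul B (1 - r), map_smul B r,
        map_smul B τ, e1, hp, hq, ← hs, smul_add]
      rw [hy]
      simp only [hB, map_add, map_sub, map_smul]
      clear_value B
      rw [← hrc]
      module
    have n1 := aux_minus_le p _ (h1 p)
    rw [← hB, hp] at n1
    have n2 := aux_minus_le _ _ (h2 (y n))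
    have n3 := aux_le q _ (h1 q)
    rw [← hB, hq] at n3
    rw [key]
    refine (norm_add₃_le).trans ?_
    rw [norm_smul, norm_smul, norm_smul, Real.norm_of_nonneg hr0, Real.norm_of_nonneg hτ.le,
      Real.norm_of_nonneg (sub_nonneg.2 hr1)]
    have m1 := mul_le_mul_of_nonneg_left (n1.trans n2) hr0
    have m2 := mul_le_mul_of_nonneg_left n3 hτ.le
    linarith
  intro n
  change n < N → ‖y (n + 1) + c • A₂ (y (n + 1))‖ ≤ ‖w0 + c • A₂ w0‖ + _
  induction n with
  | zero =>
    intro hn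
    have := step 0 hn
    rw [hinit] at this
    simpa using this
  | succ k ih =>
    intro hn
    have a := step (k + 1) hn
    have b := ih (by omega)
    rw [Finset.sum_range_succ, mul_add]
    linarith
end

section
/- Let H be a finite-dimensional real inner product space and let A₁, A₂ : H → H be self-adjoint operators with ⟨A_α u,u⟩ ≥ 0 for all u (α = 1,2). Let τ > 0 and σ > 0, and set B_α = I + στA_α and S_α = B_α⁻¹(I − στA_α) for α = 1,2. Suppose y, y' ∈ H and φ ∈ H satisfy the factorized scheme B₁B₂ (y' − y)/τ + (A₁ + A₂) y = φ. Then B₂ y' = S B₂ y + τ B₁⁻¹ φ, where S = ((2σ−1)/(2σ)) I + (1/(2σ)) S₁ S₂. Equivalently, one has the operator identity B₁B₂ − 2στ(A₁+A₂) = (I − στA₁)(I − στA₂). -/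
open scoped RealInnerProductSpace

lemma isUnit_one_add_smul_of_nonneg
    {H : Type*} [NormedAddCommGroup H] [InnerProductSpace ℝ H] [FiniteDimensional ℝ H]
    (A : H →L[ℝ] H) (hA : ∀ u : H, 0 ≤ ⟪A u, u⟫) (c : ℝ) (hc : 0 < c) :
    IsUnit ((1 : H →L[ℝ] H) + c • A) := by
  have : CompleteSpace H := FiniteDimensional.complete ℝ H
  rw [ContinuousLinearMap.isUnit_iff_bijective]
  have hinj : Function.Injective ((1 : H →L[ℝ] H) + c • A) := by
    rw [injective_iff_map_eq_zero]
    intro u hu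
    have h1 : ⟪((1 : H →L[ℝ] H) + c • A) u, u⟫ = 0 := by rw [hu, inner_zero_left]
    simp only [ContinuousLinearMap.add_apply, ContinuousLinearMap.one_apply,
      ContinuousLinearMap.smul_apply, inner_add_left, real_inner_smul_left] at h1
    have h2 := mul_nonneg hc.le (hA u)
    have h3 : ⟪u, u⟫ ≤ 0 := by linarith
    exact inner_self_eq_zero.mp (le_antisymm h3 real_inner_self_nonneg)
  exact ⟨hinj, (LinearMap.injective_iff_surjective
    (f := (((1 : H →L[ℝ] H) + c • A : H →L[ℝ] H) : H →ₗ[ℝ] H))).mp hinj⟩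

/-- One step of the factorized scheme written through the transition operator:
if `B₁B₂(y' − y)/τ + (A₁ + A₂)y = φ` with `B_α = I + στA_α`,
`S_α = B_α⁻¹(I − στA_α)`, then `B₂y' = S(B₂y) + τB₁⁻¹φ` with
`S = ((2σ−1)/(2σ))I + (1/(2σ))S₁S₂`; equivalently,
`B₁B₂ − 2στ(A₁ + A₂) = (I − στA₁)(I − στA₂)`. -/
theorem factorized_scheme_transition
    {H : Type*} [NormedAddCommGroup H] [InnerProductSpace ℝ H]
    [FiniteDimensional ℝ H]
    (A₁ A₂ : H →L[ℝ] H)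
    (hA₁sa : ∀ u v : H, ⟪A₁ u, v⟫ = ⟪u, A₁ v⟫)
    (hA₂sa : ∀ u v : H, ⟪A₂ u, v⟫ = ⟪u, A₂ v⟫)
    (hA₁pos : ∀ u : H, 0 ≤ ⟪A₁ u, u⟫)
    (hA₂pos : ∀ u : H, 0 ≤ ⟪A₂ u, u⟫)
    (τ : ℝ) (hτ : 0 < τ)
    (σ : ℝ) (hσ : 0 < σ)
    (B₁ B₂ S₁ S₂ : H →L[ℝ] H)
    (hB₁ : B₁ = (1 : H →L[ℝ] H) + (σ * τ) • A₁)
    (hB₂ : B₂ = (1 : H →L[ℝ] H) + (σ * τ) • A₂)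
    (hS₁ : S₁ = Ring.inverse B₁ * ((1 : H →L[ℝ] H) - (σ * τ) • A₁))
    (hS₂ : S₂ = Ring.inverse B₂ * ((1 : H →L[ℝ] H) - (σ * τ) • A₂))
    (y y' φ : H)
    (hscheme : (B₁ * B₂) (τ⁻¹ • (y' - y)) + (A₁ + A₂) y = φ) :
    B₂ y' =
      (((2 * σ - 1) / (2 * σ)) • (1 : H →L[ℝ] H) + (1 / (2 * σ)) • (S₁ * S₂)) (B₂ y) +
        τ • (Ring.inverse B₁) φ ∧
    B₁ * B₂ - (2 * σ * τ) • (A₁ + A₂) =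
      ((1 : H →L[ℝ] H) - (σ * τ) • A₁) * ((1 : H →L[ℝ] H) - (σ * τ) • A₂) := by
  have hU₁ : IsUnit B₁ := hB₁ ▸ isUnit_one_add_smul_of_nonneg A₁ hA₁pos _ (mul_pos hσ hτ)
  have hU₂ : IsUnit B₂ := hB₂ ▸ isUnit_one_add_smul_of_nonneg A₂ hA₂pos _ (mul_pos hσ hτ)
  have hid : B₁ * B₂ - (2 * σ * τ) • (A₁ + A₂) =
      ((1 : H →L[ℝ] H) - (σ * τ) • A₁) * ((1 : H →L[ℝ] H) - (σ * τ) • A₂) := by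
    rw [hB₁, hB₂]
    simp only [mul_add, add_mul, mul_sub, sub_mul, one_mul, mul_one]
    module
  refine ⟨?_, hid⟩
  have hi₁ : Ring.inverse B₁ * B₁ = 1 := Ring.inverse_mul_cancel _ hU₁
  have hi₂ : Ring.inverse B₂ * B₂ = 1 := Ring.inverse_mul_cancel _ hU₂
  have hcomm : ((1 : H →L[ℝ] H) - (σ * τ) • A₂) * B₂ =
      B₂ * ((1 : H →L[ℝ] H) - (σ * τ) • A₂) := by
    rw [hB₂]
    simp only [mul_add, add_mul, mul_sub, sub_mul, one_mul, mul_one]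
    module
  have hS₂B : S₂ * B₂ = 1 - (σ * τ) • A₂ := by
    rw [hS₂, mul_assoc, hcomm, ← mul_assoc, hi₂, one_mul]
  have hSB : S₁ * S₂ * B₂ = B₂ - (2 * σ * τ) • (Ring.inverse B₁ * (A₁ + A₂)) := by
    rw [mul_assoc, hS₂B, hS₁, mul_assoc, ← hid, mul_sub, ← mul_assoc, hi₁, one_mul,
      mul_smul_comm]
  have hSy : (S₁ * S₂) (B₂ y) = B₂ y - (2 * σ * τ) • Ring.inverse B₁ ((A₁ + A₂) y) :=
    congrArg (fun T : H →L[ℝ] H => T y) hSB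
  have hRφ : Ring.inverse B₁ φ =
      τ⁻¹ • (B₂ y' - B₂ y) + Ring.inverse B₁ ((A₁ + A₂) y) := by
    have hc : ∀ z, Ring.inverse B₁ (B₁ z) = z := fun z =>
      congrArg (fun T : H →L[ℝ] H => T z) hi₁
    rw [← hscheme, map_add, ContinuousLinearMap.mul_apply, hc, map_smul, map_sub]
  rw [ContinuousLinearMap.add_apply, ContinuousLinearMap.smul_apply,
    ContinuousLinearMap.smul_apply, ContinuousLinearMap.one_apply, hSy, hRφ]
  generalize Ring.inverse B₁ ((A₁ + A₂) y) = w
  match_scalars <;> field_simp <;> ring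
end
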